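/- arXiv:2105.04307 — 2 statements merged into one kernel-verified Lean document; each statement's English description precedes it below -/
import Mathlib

section
/- The sum over nonzero Eisenstein integers Σ_{κ ∈ ℤ[e^{πi/3}]∖{0}} 1/((1 − 2κ)κ²) equals 2π/√3 − 4. -/
open Complex

noncomputable section

/-- `e^{πi/3}`. -/
def τ : ℂ := Complex.exp (Real.pi * Complex.I / 3)

/-- The point `mϖ + n e^{πi/3} ϖ` of the hexagonal lattice with real period `ϖ`. -/
def hexPt (ϖ : ℝ) (p : ℤ × ℤ) : ℂ := p.1 * ϖ + p.2 * τ * ϖ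

/-- The hexagonal lattice `𝕋 = ℤϖ + ℤ e^{πi/3} ϖ`. -/
def hexLattice (ϖ : ℝ) : Set ℂ := Set.range (hexPt ϖ)

/-- The real fundamental period `ϖ = Γ(1/3)³/(2π)`. -/
def ϖ₀ : ℝ := (Real.Gamma (1/3))^3 / (2 * Real.pi)

/-- The Weierstrass `℘`-function of the hexagonal lattice `𝕋 = ℤϖ₀ + ℤ e^{πi/3} ϖ₀`,
i.e. the `℘`-function with invariants `g₂ = 0`, `g₃ = 1`. -/
def wp (z : ℂ) : ℂ :=
  1 / z ^ 2 + ∑' p : {p : ℤ × ℤ // p ≠ 0}, (1 / (z - hexPt ϖ₀ p) ^ 2 - 1 / (hexPt ϖ₀ p) ^ 2)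

/-- The Weierstrass `σ`-function of the hexagonal lattice with real period `ϖ`. -/
def wSigma (ϖ : ℝ) (z : ℂ) : ℂ :=
  z * ∏' p : {p : ℤ × ℤ // p ≠ 0},
    ((1 - z / hexPt ϖ p) * Complex.exp (z / hexPt ϖ p + z ^ 2 / (2 * (hexPt ϖ p) ^ 2)))

/-- The Weierstrass `ζ`-function of the hexagonal lattice with real period `ϖ`. -/
def wZeta (ϖ : ℝ) (z : ℂ) : ℂ :=
  1 / z + ∑' p : {p : ℤ × ℤ // p ≠ 0},
    (1 / (z - hexPt ϖ p) + 1 / hexPt ϖ p + z / (hexPt ϖ p) ^ 2)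

/-- The Eisenstein integer `a + b e^{πi/3}`. -/
def eisen (p : ℤ × ℤ) : ℂ := (p.1 : ℂ) + (p.2 : ℂ) * τ

/-!
In the sum over a lattice `ℤz + ℤ` the terms at `x` and `-x` may be averaged. For `x ≠ 0` this turns
`1 / ((1 - 2x)x²)` into `1 / x² - (1 / (x - 1/2) - 1 / (x + 1/2))`, whose bracket telescopes to `0`
along each row `mz + ℤ`. The bracket is `-4` at the omitted point `x = 0`, so its sum over the other
points is `4`, and the lattice sum is `G₂(z) - 4`.

The quasimodularity of `G₂` forces `G₂(z) = π / Im z` at every fixed point of an element of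
`SL(2, ℤ)` with nonzero lower left entry, and `e^{πi/3}`, of imaginary part `√3 / 2`, is fixed by
`TS`.
-/

open EisensteinSeries Filter ModularForm ModularGroup SummationFilter
open UpperHalfPlane hiding I
open scoped MatrixGroups Real

lemma denom_sub_inv_denom_of_smul_eq_self {g : SL(2, ℝ)} {z : ℍ} (hz : g • z = z) :
    denom g z - (denom g z)⁻¹ = 2 * I * g 1 0 * z.im := by
  have hnormSq : normSq (denom g z) = 1 := by
    have him := im_smul_eq_div_normSq (g : GL (Fin 2) ℝ) z
    rw [show (g : GL (Fin 2) ℝ) • z = z from hz] at him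
    simp only [Matrix.SpecialLinearGroup.coeToGL_det, Units.val_one, abs_one, one_mul] at him
    rwa [eq_div_iff (normSq_denom_pos g z.im_ne_zero).ne', mul_eq_left₀ z.im_ne_zero] at him
  have hinv : (denom g z)⁻¹ = starRingEnd ℂ (denom g z) := by
    rw [Complex.inv_def, hnormSq, inv_one, ofReal_one, mul_one]
  have hdenom_im : (denom g z).im = g 1 0 * z.im := by
    simp [denom]
  rw [hinv, sub_conj, hdenom_im]
  push_cast
  ring

lemma G2_eq_pi_div_im_of_smul_eq_self {γ : SL(2, ℤ)} {z : ℍ} (hγ : γ 1 0 ≠ 0) (hz : γ • z = z) :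
    G2 z = π / z.im := by
  have hslash : G2 z * denom γ z ^ (-2 : ℤ) = G2 z - 2 * π * I * γ 1 0 / denom γ z := by
    have h := congrFun (G2_slash_action γ) z
    rwa [SL_slash_apply, hz] at h
  have hdenom : denom γ z ≠ 0 := denom_ne_zero γ z
  have hγ' : (γ 1 0 : ℂ) ≠ 0 := mod_cast hγ
  have him : (z.im : ℂ) ≠ 0 := mod_cast z.im_ne_zero
  have hmul : G2 z * (denom γ z - (denom γ z)⁻¹) = 2 * π * I * γ 1 0 := by
    rw [zpow_neg, zpow_ofNat] at hslash
    field_simp at hslash ⊢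
    linear_combination -hslash
  have hsub : denom γ z - (denom γ z)⁻¹ = 2 * I * γ 1 0 * z.im := by
    simpa using denom_sub_inv_denom_of_smul_eq_self (g := (γ : SL(2, ℝ))) hz
  rw [hsub] at hmul
  rw [eq_div_iff him]
  apply mul_left_cancel₀ (mul_ne_zero (mul_ne_zero two_ne_zero I_ne_zero) hγ')
  linear_combination hmul

/-- The point `mz + n` of the lattice `ℤz + ℤ`, with the coefficient of `z` first as in Mathlib's
Eisenstein series. -/
def latticePoint (z : ℂ) (p : ℤ × ℤ) : ℂ := p.1 * z + p.2

lemma latticePoint_neg (z : ℂ) (p : ℤ × ℤ) : latticePoint z (-p) = -latticePoint z p := by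
  simp only [latticePoint, Prod.fst_neg, Prod.snd_neg, Int.cast_neg]
  ring

lemma latticePoint_eq_zero_iff (z : ℍ) (p : ℤ × ℤ) : latticePoint z p = 0 ↔ p = 0 := by
  refine ⟨fun h => ?_, fun h => by simp [latticePoint, h]⟩
  by_contra hp
  refine linear_ne_zero z (cd := ![p.1, p.2]) (fun hcd => hp ?_) (by simpa [latticePoint] using h)
  simpa [Prod.ext_iff] using hcd

lemma intCast_mul_sub_half_mem_integerComplement (z : ℍ) (m : ℤ) :
    (m * z - 1 / 2 : ℂ) ∈ integerComplement := by
  rintro ⟨n, hn⟩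
  have h : latticePoint z (2 * m, -(2 * n + 1)) = 0 := by
    simp only [latticePoint]
    push_cast
    linear_combination -2 * hn
  have := congrArg Prod.snd ((latticePoint_eq_zero_iff z _).mp h)
  simp only [Prod.snd_zero] at this
  lia

lemma isBigO_inv_latticePoint (z : ℍ) :
    (fun v : Fin 2 → ℤ => (latticePoint z (v 0, v 1))⁻¹) =O[cofinite] fun v => ‖v‖⁻¹ := by
  simpa [latticePoint] using isBigO_linear_add_const_vec z 0 0

lemma isBigO_inv_one_sub_two_mul_latticePoint (z : ℍ) :
    (fun v : Fin 2 → ℤ => (1 - 2 * latticePoint z (v 0, v 1))⁻¹) =O[cofinite]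
      fun v => ‖v‖⁻¹ := by
  have hinj : Function.Injective fun v : Fin 2 → ℤ => (-2 : ℤ) • v :=
    smul_right_injective _ (by norm_num)
  have hnorm (v : Fin 2 → ℤ) : ‖(-2 : ℤ) • v‖⁻¹ = 2⁻¹ * ‖v‖⁻¹ := by
    rw [norm_smul, mul_inv, Int.norm_eq_abs]
    norm_num
  have hpoint (v : Fin 2 → ℤ) : 1 - 2 * latticePoint z (v 0, v 1)
      = (((-2 : ℤ) • v) 0 + (0 : ℤ)) * z + ((-2 : ℤ) • v) 1 + (1 : ℤ) := by
    simp only [latticePoint, Pi.smul_apply, smul_eq_mul]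
    push_cast
    ring
  have hscale : (fun v : Fin 2 → ℤ => ‖(-2 : ℤ) • v‖⁻¹) =O[cofinite] fun v => ‖v‖⁻¹ := by
    simpa only [hnorm] using Asymptotics.isBigO_const_mul_self _ _ _
  simp_rw [hpoint]
  exact ((isBigO_linear_add_const_vec z 0 1).comp_tendsto hinj.tendsto_cofinite).trans hscale

lemma summable_one_div_one_sub_two_mul_latticePoint_mul_sq (z : ℍ) :
    Summable fun p => 1 / ((1 - 2 * latticePoint z p) * latticePoint z p ^ 2) := by
  rw [← (finTwoArrowEquiv ℤ).summable_iff]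
  apply summable_of_isBigO_rpow_norm (a := 3) (by norm_num)
  have hcube := (isBigO_inv_one_sub_two_mul_latticePoint z).mul ((isBigO_inv_latticePoint z).pow 2)
  refine hcube.congr (fun v => ?_) fun v => ?_
  · simp [mul_comm]
  · norm_cast
    rw [← pow_succ', inv_pow]

lemma hasSum_half_add_comp_neg {G R : Type*} [InvolutiveNeg G] [DivisionSemiring R] [NeZero (2 : R)]
    [TopologicalSpace R] [IsTopologicalSemiring R] {f : G → R} {a : R}
    (hf : HasSum f a) : HasSum (fun x => (f x + f (-x)) / 2) a := by
  have h := (hf.add ((Equiv.neg G).hasSum_iff.mpr hf)).div_const 2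
  rwa [add_self_div_two] at h

lemma hasSum_one_div_add_int_sub_succ {w : ℂ} (hw : w ∈ integerComplement) :
    HasSum (fun n : ℤ => 1 / (w + n) - 1 / (w + n + 1)) 0 := by
  have hsummable : Summable fun n : ℤ => 1 / (w + n) - 1 / (w + n + 1) := by
    refine (summable_linear_right_add_one_mul_linear_right w 1 1).congr fun n => ?_
    have h0 := integerComplement_add_ne_zero hw n
    have h1 : w + n + 1 ≠ 0 := by simpa [add_assoc] using integerComplement_add_ne_zero hw (n + 1)
    rw [Int.cast_one, one_mul]
    field_simp
    ring
  have hIco : HasSum (fun n : ℤ => 1 / (w + n) - 1 / (w + n + 1)) 0 (symmetricIco ℤ) := by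
    have hpartial (N : ℕ) : ∑ n ∈ Finset.Ico (-N : ℤ) N, (1 / (w + n) - 1 / (w + n + 1))
        = 1 / (w - N) - 1 / (w + N) := by
      convert Finset.sum_Ico_int_sub N fun n : ℤ => 1 / (w + n) using 2 <;>
        simp [add_assoc, sub_eq_add_neg]
    simp_rw [hasSum_symmetricIco_int_iff, hpartial]
    simpa using (tendsto_zero_inv_linear_sub w 1).sub (tendsto_zero_inv_linear w 1)
  rw [hsummable.hasSum_iff, ← hIco.tsum_eq,
    tsum_eq_of_summable_unconditional (L := symmetricIco ℤ) hsummable]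

/-- The even part of the summand `x ↦ 1 / ((1 - 2x)x²)`, which has the same sum over a lattice. -/
def evenSummand (x : ℂ) : ℂ := (1 / ((1 - 2 * x) * x ^ 2) + 1 / ((1 - 2 * -x) * (-x) ^ 2)) / 2

-- At `x = 0` the left-hand side and `1 / x ^ 2` are `0` by convention, and the bracket is `-4`.
lemma evenSummand_eq {x : ℂ} (hsub : x - 1 / 2 ≠ 0) (hadd : x - 1 / 2 + 1 ≠ 0) :
    evenSummand x =
      1 / x ^ 2 - (1 / (x - 1 / 2) - 1 / (x - 1 / 2 + 1)) - if x = 0 then 4 else 0 := by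
  have h1 : 1 - 2 * x ≠ 0 := fun h => hsub (by linear_combination -h / 2)
  have h2 : 1 - 2 * -x ≠ 0 := fun h => hadd (by linear_combination h / 2)
  unfold evenSummand
  split_ifs with hx
  · norm_num [hx]
  · field_simp
    grind

lemma hasSum_evenSummand_row (z : ℍ) (m : ℤ) :
    HasSum (fun n => evenSummand (latticePoint z (m, n)))
      (e2Summand m z - if m = 0 then 4 else 0) := by
  have hw := intCast_mul_sub_half_mem_integerComplement z m
  have hpole : HasSum (fun n : ℤ => if n = 0 then (if m = 0 then (4 : ℂ) else 0) else 0)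
      (if m = 0 then 4 else 0) := hasSum_ite_eq 0 _
  have hsplit (n : ℤ) : evenSummand (latticePoint z (m, n)) = eisSummand 2 ![m, n] z
      - (1 / (m * z - 1 / 2 + n) - 1 / (m * z - 1 / 2 + n + 1))
      - if n = 0 then (if m = 0 then 4 else 0) else 0 := by
    have hcomm : latticePoint z (m, n) - 1 / 2 = m * z - 1 / 2 + n := by
      rw [latticePoint]
      ring
    have hsub := integerComplement_add_ne_zero hw n
    have hadd := integerComplement_add_ne_zero hw (n + 1)
    rw [Int.cast_add, Int.cast_one, ← add_assoc] at hadd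
    rw [← hcomm] at hsub hadd ⊢
    have hzero : latticePoint z (m, n) = 0 ↔ n = 0 ∧ m = 0 := by
      rw [latticePoint_eq_zero_iff, Prod.mk_eq_zero, and_comm]
    simp only [evenSummand_eq hsub hadd, hzero, ite_and]
    simp [latticePoint, eisSummand]
  have h := ((e2Summand_summable m z).hasSum.sub (hasSum_one_div_add_int_sub_succ hw)).sub hpole
  rw [sub_zero] at h
  simp_rw [hsplit]
  exact h

lemma hasSum_one_div_one_sub_two_mul_latticePoint_mul_sq (z : ℍ) :
    HasSum (fun p => 1 / ((1 - 2 * latticePoint z p) * latticePoint z p ^ 2)) (G2 z - 4) := by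
  have hsum := (summable_one_div_one_sub_two_mul_latticePoint_mul_sq z).hasSum
  have heven := hasSum_half_add_comp_neg hsum
  simp_rw [latticePoint_neg] at heven
  have hrows := heven.prod_fiberwise (hasSum_evenSummand_row z)
  have hG2 := (summable_e2Summand_symmetricIcc z).hasSum.sub
    (hasSum_ite_eq (L := symmetricIcc ℤ) 0 (4 : ℂ))
  rwa [HasSum.unique (hrows.mono_left LeAtTop.le_atTop) hG2] at hsum

theorem eisenstein_sum_general {γ : SL(2, ℤ)} {z : ℍ} (hγ : γ 1 0 ≠ 0) (hz : γ • z = z) :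
    HasSum (fun p : {p : ℤ × ℤ // p ≠ 0} =>
      1 / ((1 - 2 * (p.1.1 + p.1.2 * z : ℂ)) * (p.1.1 + p.1.2 * z) ^ 2))
      ((π / z.im - 4 : ℝ) : ℂ) := by
  have h := hasSum_one_div_one_sub_two_mul_latticePoint_mul_sq z
  rw [G2_eq_pi_div_im_of_smul_eq_self hγ hz, ← (Equiv.prodComm ℤ ℤ).hasSum_iff,
    ← hasSum_subtype_iff_of_support_subset (s := {p | p ≠ 0})] at h
  · push_cast
    refine h.congr_fun fun p => ?_
    simp [latticePoint, add_comm]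
  · rintro p hp rfl
    simp [latticePoint] at hp

lemma coe_T_smul_ρ : ((T • ρ : ℍ) : ℂ) = τ := by
  have hexp : (π * I / 3 : ℂ) = (π / 3 : ℝ) * I := by
    push_cast
    ring
  rw [τ, hexp, modular_T_smul, coe_vadd, exp_mul_I, ← ofReal_cos, ← ofReal_sin,
    Real.cos_pi_div_three, Real.sin_pi_div_three]
  norm_num [ρ, Complex.ext_iff]

lemma im_T_smul_ρ : (T • ρ).im = √3 / 2 := by
  simp [ρ, im_T_smul, -sl_moeb]

lemma T_mul_S_smul_T_smul_ρ : (T * S) • T • ρ = T • ρ := by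
  rw [smul_smul, mul_assoc, ← smul_smul, stabilizer_ρ.mpr (by simp)]

/-- `Σ_{κ ∈ ℤ[e^{πi/3}]∖{0}} 1/((1 − 2κ)κ²) = 2π/√3 − 4`. -/
theorem eisenstein_sum :
    ∑' p : {p : ℤ × ℤ // p ≠ 0}, 1 / ((1 - 2 * eisen p.1) * (eisen p.1) ^ 2)
      = ((2 * Real.pi / Real.sqrt 3 - 4 : ℝ) : ℂ) := by
  have h := (eisenstein_sum_general (by decide) T_mul_S_smul_T_smul_ρ).tsum_eq
  rwa [coe_T_smul_ρ, im_T_smul_ρ, div_div_eq_mul_div, mul_comm π] at h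
end
end

section
/- For the hexagonal lattice, ℘(z) = r σ(r^{-1} z)/σ(z)³, where r = (√3/3)e^{πi/6}; equivalently ℘(z) = σ(z; r𝕋)/σ(z; 𝕋)³. -/
open Complex

noncomputable section

/-- `r = (√3/3) e^{πi/6}`. -/
def rr : ℂ := (Real.sqrt 3 / 3 : ℝ) * Complex.exp (Real.pi * Complex.I / 6)

/-!
The second logarithmic derivative of the Weierstrass product `σ` is `-℘`, so every lattice point `w`
has constants `C ≠ 0`, `η` with `σ (z + w) = C * exp (η * z) * σ z`. Multiplication by a primitive
sixth root of unity `t` preserves the lattice, so translation by `t * w` has the exponential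
`exp (t⁻¹ * η * z)`. Since `(1 + t) * (1 + t⁻¹) = 3`, the exponentials in `z` cancel in
`Q z = (1 + t)⁻¹ * σ ((1 + t) * z) / σ z ^ 3`, leaving `Q (z + w) = K * Q z`. By rotation, `w`,
`t * w` and `t ^ 2 * w` share the same `K`, and `t ^ 2 * w + w = t * w` gives `K ^ 2 = K`, so `Q` is
elliptic. Rotation also kills the Taylor coefficients that could make `Q` and `℘` differ in their
principal part at `0`, or `Q - ℘` nonzero there; Liouville's theorem concludes.
-/

open Filter Set
open scoped Topology PeriodPair

/-! ### Elementary factors -/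

/-- The Weierstrass elementary factor of genus two; its exponential is chosen so that
`elementaryFactor x = 1 + O(x ^ 3)`. -/
def elementaryFactor (x : ℂ) : ℂ := (1 - x) * exp (x + x ^ 2 / 2)

@[simp]
lemma elementaryFactor_zero : elementaryFactor 0 = 1 := by simp [elementaryFactor]

lemma elementaryFactor_ne_zero {x : ℂ} (hx : x ≠ 1) : elementaryFactor x ≠ 0 :=
  mul_ne_zero (sub_ne_zero.mpr hx.symm) (exp_ne_zero _)

lemma hasDerivAt_elementaryFactor (x : ℂ) :
    HasDerivAt elementaryFactor (-x ^ 2 * exp (x + x ^ 2 / 2)) x := by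
  have hexp : HasDerivAt (fun x : ℂ ↦ exp (x + x ^ 2 / 2)) (exp (x + x ^ 2 / 2) * (1 + x)) x := by
    simpa using ((hasDerivAt_id x).add ((hasDerivAt_pow 2 x).div_const 2)).cexp
  exact (((hasDerivAt_id x).const_sub 1).mul hexp).congr_deriv (by simp only [id]; ring)

lemma differentiable_elementaryFactor : Differentiable ℂ elementaryFactor :=
  fun x ↦ (hasDerivAt_elementaryFactor x).differentiableAt

lemma norm_elementaryFactor_sub_one_le {x : ℂ} (hx : ‖x‖ ≤ 1) :
    ‖elementaryFactor x - 1‖ ≤ Real.exp (3 / 2) * ‖x‖ ^ 3 := by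
  have hderiv : ∀ y ∈ Metric.closedBall (0 : ℂ) ‖x‖,
      ‖-y ^ 2 * exp (y + y ^ 2 / 2)‖ ≤ Real.exp (3 / 2) * ‖x‖ ^ 2 := fun y hy ↦ by
    have hyx : ‖y‖ ≤ ‖x‖ := by simpa using hy
    have hexponent : ‖y + y ^ 2 / 2‖ ≤ 3 / 2 := calc
      ‖y + y ^ 2 / 2‖ ≤ ‖y‖ + ‖y‖ ^ 2 / 2 := (norm_add_le _ _).trans_eq (by simp)
      _ ≤ 1 + 1 ^ 2 / 2 := by gcongr <;> exact hyx.trans hx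
      _ = 3 / 2 := by norm_num
    calc ‖-y ^ 2 * exp (y + y ^ 2 / 2)‖ = ‖exp (y + y ^ 2 / 2)‖ * ‖y‖ ^ 2 := by
          rw [norm_mul, norm_neg, norm_pow, mul_comm]
      _ ≤ Real.exp (3 / 2) * ‖x‖ ^ 2 := by
          gcongr
          exact (norm_exp_le_exp_norm _).trans (Real.exp_le_exp.mpr hexponent)
  simpa [pow_succ, mul_assoc] using
    (convex_closedBall (0 : ℂ) ‖x‖).norm_image_sub_le_of_norm_hasDerivWithin_le
      (fun y _ ↦ (hasDerivAt_elementaryFactor y).hasDerivWithinAt) hderiv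
      (Metric.mem_closedBall_self (norm_nonneg x)) (show x ∈ _ by simp)

lemma differentiable_elementaryFactor_div (l : ℂ) :
    Differentiable ℂ fun z ↦ elementaryFactor (z / l) :=
  differentiable_elementaryFactor.comp (differentiable_id.div_const l)

lemma elementaryFactor_div_ne_zero {z l : ℂ} (h : l ≠ 0 → z ≠ l) :
    elementaryFactor (z / l) ≠ 0 := by
  refine elementaryFactor_ne_zero ?_
  rcases eq_or_ne l 0 with rfl | hl
  · simp
  · exact fun hzl ↦ h hl ((div_eq_one_iff_eq hl).mp hzl)

lemma logDeriv_elementaryFactor_div {z l : ℂ} (hz : z ≠ l) (hl : l ≠ 0) :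
    logDeriv (fun z ↦ elementaryFactor (z / l)) z = 1 / (z - l) + 1 / l + z / l ^ 2 := by
  have hderiv := (hasDerivAt_elementaryFactor (z / l)).comp z ((hasDerivAt_id z).div_const l)
  have hzl : z - l ≠ 0 := sub_ne_zero.mpr hz
  rw [logDeriv_apply, show deriv (fun z ↦ elementaryFactor (z / l)) z = _ from hderiv.deriv,
    div_eq_iff (elementaryFactor_div_ne_zero fun _ ↦ hz), elementaryFactor]
  field_simp
  ring

lemma deriv_logDeriv_elementaryFactor_div {z l : ℂ} (hz : z ≠ l) :
    deriv (logDeriv fun z ↦ elementaryFactor (z / l)) z =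
      -(if l = 0 then 0 else 1 / (z - l) ^ 2 - 1 / l ^ 2) := by
  split_ifs with hl
  · have hconst : (fun z : ℂ ↦ elementaryFactor (z / l)) = fun _ ↦ 1 := by simp [hl]
    simp [hconst]
  · have hformula : (logDeriv fun z ↦ elementaryFactor (z / l)) =ᶠ[𝓝 z]
        fun z ↦ (z - l)⁻¹ + 1 / l + z / l ^ 2 := by
      filter_upwards [isOpen_ne.mem_nhds hz] with x hx
      rw [logDeriv_elementaryFactor_div hx hl, one_div (x - l)]
    have hinv := ((hasDerivAt_id z).sub_const l).inv (sub_ne_zero.mpr hz)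
    have hderiv := (hinv.add_const (1 / l)).add ((hasDerivAt_id z).div_const (l ^ 2))
    refine hformula.deriv_eq.trans (hderiv.deriv.trans ?_)
    simp only [id]
    ring

/-! ### Logarithmic derivatives -/

lemma hasSum_deriv_logDeriv_of_hasProdLocallyUniformlyOn {ι : Type*} {f : ι → ℂ → ℂ} {g : ℂ → ℂ}
    {U : Set ℂ} (hU : IsOpen U) (hfg : HasProdLocallyUniformlyOn f g U)
    (hf : ∀ i, DifferentiableOn ℂ (f i) U) (hf₀ : ∀ i, ∀ z ∈ U, f i z ≠ 0)
    (hg₀ : ∀ z ∈ U, g z ≠ 0) {z : ℂ} (hz : z ∈ U) :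
    HasSum (fun i ↦ deriv (logDeriv (f i)) z) (deriv (logDeriv g) z) := by
  have hprod : TendstoLocallyUniformlyOn (fun (s : Finset ι) z ↦ ∏ i ∈ s, f i z) g atTop U := hfg
  have hprodDiff (s : Finset ι) : DifferentiableOn ℂ (fun z ↦ ∏ i ∈ s, f i z) U :=
    .fun_finsetProd fun i _ ↦ hf i
  have hgDiff : DifferentiableOn ℂ g U := hprod.differentiableOn (.of_forall hprodDiff) hU
  have hlog := (hprod.deriv (.of_forall hprodDiff) hU).div₀ hprod (hgDiff.deriv hU).continuousOn
    hgDiff.continuousOn hg₀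
  have hlogDiff (i : ι) : DifferentiableOn ℂ (logDeriv (f i)) U :=
    ((hf i).deriv hU).div (hf i) (hf₀ i)
  have hlogProd (s : Finset ι) : EqOn (logDeriv fun z ↦ ∏ i ∈ s, f i z)
      (fun z ↦ ∑ i ∈ s, logDeriv (f i) z) U := fun x hx ↦
    logDeriv_prod (fun i _ ↦ hf₀ i x hx) fun i _ ↦ (hf i).differentiableAt (hU.mem_nhds hx)
  have hlim := (hlog.congr fun s ↦ hlogProd s).deriv
    (.of_forall fun s ↦ .fun_sum fun i _ ↦ hlogDiff i) hU
  refine (hlim.tendsto_at hz).congr fun s ↦ ?_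
  exact deriv_fun_sum fun i _ ↦ (hlogDiff i).differentiableAt (hU.mem_nhds hz)

lemma exists_eq_const_mul_exp_mul_of_logDeriv_eq_add {f g : ℂ → ℂ} {U : Set ℂ} {c : ℂ}
    (hU : IsOpen U) (hUc : IsPreconnected U) (hUd : Dense U)
    (hf : Differentiable ℂ f) (hg : Differentiable ℂ g) (hf₀ : ∀ z ∈ U, f z ≠ 0)
    (hg₀ : ∀ z ∈ U, g z ≠ 0) (h : ∀ z ∈ U, logDeriv f z = logDeriv g z + c) :
    ∃ C ≠ 0, ∀ z, f z = C * exp (c * z) * g z := by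
  have hexpDeriv (z : ℂ) : HasDerivAt (fun z ↦ exp (c * z)) (exp (c * z) * c) z := by
    simpa using ((hasDerivAt_id z).const_mul c).cexp
  have hexp : Differentiable ℂ fun z ↦ exp (c * z) := fun z ↦ (hexpDeriv z).differentiableAt
  have hlog : EqOn (logDeriv f) (logDeriv fun z ↦ exp (c * z) * g z) U := fun z hz ↦ by
    rw [logDeriv_mul (f := fun z ↦ exp (c * z)) z (exp_ne_zero _) (hg₀ z hz) (hexp z) (hg z),
      h z hz, logDeriv_apply (fun z ↦ exp (c * z)), (hexpDeriv z).deriv,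
      mul_div_cancel_left₀ _ (exp_ne_zero _), add_comm]
  obtain ⟨C, hC, hEq⟩ := (logDeriv_eqOn_iff hf.differentiableOn
    (hexp.mul hg).differentiableOn hU hUc
    (fun z hz ↦ mul_ne_zero (exp_ne_zero _) (hg₀ z hz)) hf₀).mp hlog
  have hEverywhere := hf.continuous.ext_on hUd ((hexp.mul hg).continuous.const_smul C) hEq
  exact ⟨C, hC, fun z ↦ by simpa [mul_assoc] using congrFun hEverywhere z⟩

lemma natCast_le_analyticOrderAt_of_comp_mul_left_eq {f : ℂ → ℂ} {t : ℂ} {n : ℕ}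
    (hf : Differentiable ℂ f) (hf₀ : f 0 = 0) (hft : ∀ z, f (t * z) = f z)
    (ht : ∀ k, 0 < k → k < n → t ^ k ≠ 1) : (n : ℕ∞) ≤ analyticOrderAt f 0 := by
  rw [natCast_le_analyticOrderAt_iff_iteratedDeriv_eq_zero (hf.analyticAt 0)]
  rintro (_ | k) hk
  · simpa using hf₀
  · have hcoeff : iteratedDeriv (k + 1) f 0 = t ^ (k + 1) * iteratedDeriv (k + 1) f 0 := by
      have hcomp := congrFun (iteratedDeriv_comp_const_mul (n := k + 1) hf.contDiff t) 0
      simpa [funext hft] using hcomp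
    refine (mul_eq_zero.mp ?_).resolve_left (sub_ne_zero.mpr (ht (k + 1) k.succ_pos hk))
    rw [sub_one_mul, ← hcoeff, sub_self]

/-! ### The sigma function of a period pair -/

section WeierstrassSigma

variable (L : PeriodPair)

/-- The Weierstrass product of the elementary factors `elementaryFactor (z / l)`. The lattice point
`l = 0` may be included, as its factor is `elementaryFactor (z / 0) = 1`. -/
def weierstrassProd (z : ℂ) : ℂ := ∏' l : L.lattice, elementaryFactor (z / l)

/-- The Weierstrass sigma function of the lattice spanned by `L`. -/
def weierstrassSigma (z : ℂ) : ℂ := z * weierstrassProd L z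

lemma isOpen_compl_lattice : IsOpen (L.lattice : Set ℂ)ᶜ := L.isClosed_lattice.isOpen_compl

lemma countable_lattice : (L.lattice : Set ℂ).Countable := by
  have : Countable L.lattice := inferInstance
  exact to_countable _

lemma isPreconnected_compl_lattice : IsPreconnected (L.lattice : Set ℂ)ᶜ :=
  ((countable_lattice L).isConnected_compl_of_one_lt_rank
    (by simp [Complex.rank_real_complex])).isPreconnected

lemma dense_compl_lattice : Dense (L.lattice : Set ℂ)ᶜ := (countable_lattice L).dense_compl ℂ

lemma eventually_cofinite_lt_norm_lattice (r : ℝ) : ∀ᶠ l : L.lattice in cofinite, r < ‖l‖ := by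
  refine (isCompact_iff_finite.mp (isCompact_closedBall (0 : L.lattice) r)).subset fun l hl ↦ ?_
  simpa using hl

lemma eventually_norm_elementaryFactor_div_sub_one_le (r : ℝ) :
    ∀ᶠ l : L.lattice in cofinite, ∀ z : ℂ, ‖z‖ ≤ r →
      ‖elementaryFactor (z / l) - 1‖ ≤ Real.exp (3 / 2) * r ^ 3 * ‖l‖⁻¹ ^ 3 := by
  filter_upwards [eventually_cofinite_lt_norm_lattice L r] with l hl z hz
  have hquot : ‖z / l‖ = ‖z‖ * ‖l‖⁻¹ := norm_div z l
  have hle : ‖z / l‖ ≤ 1 := by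
    rw [norm_div]
    exact div_le_one_of_le₀ (hz.trans hl.le) (norm_nonneg _)
  calc ‖elementaryFactor (z / l) - 1‖ ≤ Real.exp (3 / 2) * ‖z / l‖ ^ 3 :=
        norm_elementaryFactor_sub_one_le hle
    _ = Real.exp (3 / 2) * ‖z‖ ^ 3 * ‖l‖⁻¹ ^ 3 := by rw [hquot, mul_pow, mul_assoc]
    _ ≤ Real.exp (3 / 2) * r ^ 3 * ‖l‖⁻¹ ^ 3 := by gcongr

lemma summable_const_mul_norm_lattice_inv_pow_three (c : ℝ) :
    Summable fun l : L.lattice ↦ c * ‖l‖⁻¹ ^ 3 :=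
  (ZLattice.summable_norm_pow_inv _ 3 (by simp)).mul_left c

lemma hasProdLocallyUniformlyOn_weierstrassProd :
    HasProdLocallyUniformlyOn (fun (l : L.lattice) z ↦ elementaryFactor (z / l))
      (weierstrassProd L) univ := by
  refine hasProdLocallyUniformlyOn_of_forall_compact isOpen_univ fun K _ hK ↦ ?_
  obtain ⟨r, hr⟩ := hK.isBounded.exists_norm_le
  have hbound : ∀ᶠ l : L.lattice in cofinite, ∀ z ∈ K,
      ‖elementaryFactor (z / l) - 1‖ ≤ Real.exp (3 / 2) * r ^ 3 * ‖l‖⁻¹ ^ 3 :=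
    (eventually_norm_elementaryFactor_div_sub_one_le L r).mono fun l hl z hz ↦ hl z (hr z hz)
  have hcont (l : L.lattice) : ContinuousOn (fun z ↦ elementaryFactor (z / l) - 1) K :=
    ((differentiable_elementaryFactor_div l).continuous.sub continuous_const).continuousOn
  have hprod :=
    (summable_const_mul_norm_lattice_inv_pow_three L _).hasProdUniformlyOn_one_add hK hbound hcont
  simp only [add_sub_cancel] at hprod
  exact hprod

lemma differentiable_weierstrassProd : Differentiable ℂ (weierstrassProd L) := by
  rw [← differentiableOn_univ]
  refine TendstoLocallyUniformlyOn.differentiableOn (hasProdLocallyUniformlyOn_weierstrassProd L)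
    (.of_forall fun s ↦ ?_) isOpen_univ
  exact .fun_finsetProd fun l _ ↦ (differentiable_elementaryFactor_div l).differentiableOn

lemma differentiable_weierstrassSigma : Differentiable ℂ (weierstrassSigma L) :=
  differentiable_id.mul (differentiable_weierstrassProd L)

@[simp]
lemma weierstrassProd_zero : weierstrassProd L 0 = 1 := by simp [weierstrassProd]

lemma weierstrassP_eq_one_div_sq_add (z : ℂ) :
    ℘[L] z = 1 / z ^ 2 + L.weierstrassPExcept 0 z := by
  rw [← L.weierstrassPExcept_add 0 z, add_comm]
  simp

variable {L}

lemma add_notMem_lattice {z w : ℂ} (hz : z ∉ L.lattice) (hw : w ∈ L.lattice) :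
    z + w ∉ L.lattice := by
  rwa [Submodule.add_mem_iff_left _ hw]

lemma ne_zero_of_notMem_lattice {z : ℂ} (hz : z ∉ L.lattice) : z ≠ 0 :=
  (ne_of_mem_of_not_mem L.lattice.zero_mem hz).symm

lemma weierstrassProd_ne_zero {z : ℂ} (hz : z ∉ L.lattice) : weierstrassProd L z ≠ 0 := by
  have hfactor (l : L.lattice) : 1 + (elementaryFactor (z / l) - 1) ≠ 0 := by
    rw [add_sub_cancel]
    exact elementaryFactor_div_ne_zero fun _ ↦ (ne_of_mem_of_not_mem l.2 hz).symm
  have hsum : Summable fun l : L.lattice ↦ ‖elementaryFactor (z / l) - 1‖ := by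
    refine (summable_const_mul_norm_lattice_inv_pow_three L
      (Real.exp (3 / 2) * ‖z‖ ^ 3)).of_norm_bounded_eventually ?_
    filter_upwards [eventually_norm_elementaryFactor_div_sub_one_le L ‖z‖] with l hl
    simpa using hl z le_rfl
  simpa [weierstrassProd] using tprod_one_add_ne_zero_of_summable hfactor hsum

lemma weierstrassSigma_ne_zero {z : ℂ} (hz : z ∉ L.lattice) : weierstrassSigma L z ≠ 0 :=
  mul_ne_zero (ne_zero_of_notMem_lattice hz) (weierstrassProd_ne_zero hz)

lemma deriv_logDeriv_weierstrassProd {z : ℂ} (hz : z ∉ L.lattice) :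
    deriv (logDeriv (weierstrassProd L)) z = -L.weierstrassPExcept 0 z := by
  have hsum := hasSum_deriv_logDeriv_of_hasProdLocallyUniformlyOn (isOpen_compl_lattice L)
    ((hasProdLocallyUniformlyOn_weierstrassProd L).mono (subset_univ _))
    (fun l ↦ (differentiable_elementaryFactor_div l).differentiableOn)
    (fun l x hx ↦ elementaryFactor_div_ne_zero fun _ ↦ (ne_of_mem_of_not_mem l.2 hx).symm)
    (fun x hx ↦ weierstrassProd_ne_zero hx) hz
  refine hsum.unique ((L.hasSum_weierstrassPExcept 0 z).neg.congr_fun fun l ↦ ?_)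
  exact deriv_logDeriv_elementaryFactor_div (ne_of_mem_of_not_mem l.2 hz).symm

lemma logDeriv_weierstrassSigma {z : ℂ} (hz : z ∉ L.lattice) :
    logDeriv (weierstrassSigma L) z = z⁻¹ + logDeriv (weierstrassProd L) z := by
  have hmul := logDeriv_mul (f := id) z (ne_zero_of_notMem_lattice hz) (weierstrassProd_ne_zero hz)
    differentiableAt_id (differentiable_weierstrassProd L z)
  exact hmul.trans (by simp [logDeriv_apply])

lemma hasDerivAt_logDeriv_weierstrassSigma {z : ℂ} (hz : z ∉ L.lattice) :
    HasDerivAt (logDeriv (weierstrassSigma L)) (-℘[L] z) z := by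
  have hnhds := (isOpen_compl_lattice L).mem_nhds hz
  have hprod : HasDerivAt (logDeriv (weierstrassProd L)) (-L.weierstrassPExcept 0 z) z := by
    rw [← deriv_logDeriv_weierstrassProd hz]
    have hP := differentiable_weierstrassProd L
    exact (((hP.analyticAt z).deriv.differentiableAt).div (hP z)
      (weierstrassProd_ne_zero hz)).hasDerivAt
  have hlog : logDeriv (weierstrassSigma L) =ᶠ[𝓝 z] fun z ↦ z⁻¹ + logDeriv (weierstrassProd L) z :=
    eventually_of_mem hnhds fun x hx ↦ logDeriv_weierstrassSigma hx
  refine (((hasDerivAt_inv (ne_zero_of_notMem_lattice hz)).add hprod).congr_of_eventuallyEq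
    hlog).congr_deriv ?_
  rw [weierstrassP_eq_one_div_sq_add]
  ring

lemma exists_logDeriv_weierstrassSigma_add_eq {w : ℂ} (hw : w ∈ L.lattice) :
    ∃ η, ∀ z ∉ L.lattice,
      logDeriv (weierstrassSigma L) (z + w) = logDeriv (weierstrassSigma L) z + η := by
  have hshift (z : ℂ) (hz : z ∉ L.lattice) :
      HasDerivAt (fun z ↦ logDeriv (weierstrassSigma L) (z + w)) (-℘[L] z) z := by
    rw [← L.weierstrassP_add_coe z ⟨w, hw⟩]
    exact (hasDerivAt_logDeriv_weierstrassSigma (add_notMem_lattice hz hw)).comp_add_const z w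
  exact (isOpen_compl_lattice L).exists_eq_add_of_deriv_eq (isPreconnected_compl_lattice L)
    (fun z hz ↦ (hshift z hz).differentiableAt.differentiableWithinAt)
    (fun z hz ↦ (hasDerivAt_logDeriv_weierstrassSigma hz).differentiableAt.differentiableWithinAt)
    (fun z hz ↦ (hshift z hz).deriv.trans (hasDerivAt_logDeriv_weierstrassSigma hz).deriv.symm)

lemma exists_weierstrassSigma_add_eq {w : ℂ} (hw : w ∈ L.lattice) :
    ∃ η, ∃ C ≠ 0, ∀ z, weierstrassSigma L (z + w) = C * exp (η * z) * weierstrassSigma L z := by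
  obtain ⟨η, hη⟩ := exists_logDeriv_weierstrassSigma_add_eq hw
  refine ⟨η, exists_eq_const_mul_exp_mul_of_logDeriv_eq_add (isOpen_compl_lattice L)
    (isPreconnected_compl_lattice L) (dense_compl_lattice L)
    ((differentiable_weierstrassSigma L).comp (differentiable_id.add_const w))
    (differentiable_weierstrassSigma L)
    (fun z hz ↦ weierstrassSigma_ne_zero (add_notMem_lattice hz hw))
    (fun z hz ↦ weierstrassSigma_ne_zero hz) fun z hz ↦ ?_⟩
  rw [← hη z hz, logDeriv_apply, logDeriv_apply]
  simp [deriv_comp_add_const]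

lemma weierstrassProd_mul_left {u : ℂ} (hu : u ≠ 0)
    (hmem : ∀ l, l ∈ L.lattice ↔ u * l ∈ L.lattice) (z : ℂ) :
    weierstrassProd L (u * z) = weierstrassProd L z := by
  unfold weierstrassProd
  rw [← ((Equiv.mulLeft₀ u hu).subtypeEquiv hmem).tprod_eq]
  exact tprod_congr fun l ↦ congrArg elementaryFactor (mul_div_mul_left z (l : ℂ) hu)

lemma eq_zero_of_lattice_periodic {f g : ℂ → ℂ} (hper : ∀ z, ∀ w ∈ L.lattice, f (z + w) = f z)
    (hf : DifferentiableOn ℂ f (L.lattice : Set ℂ)ᶜ) (hg : DifferentiableAt ℂ g 0) (hg₀ : g 0 = 0)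
    (hfg : f =ᶠ[𝓝[≠] 0] g) {z : ℂ} (hz : z ∉ L.lattice) : f z = 0 := by
  set F : ℂ → ℂ := (L.lattice : Set ℂ)ᶜ.indicator f with hF
  have hFper (z w : ℂ) (hw : w ∈ L.lattice) : F (z + w) = F z :=
    indicator_eq_indicator (not_congr (L.lattice.add_mem_iff_left hw)) (hper z w hw)
  have hFg : F =ᶠ[𝓝 0] g := by
    filter_upwards [eventually_nhdsWithin_iff.mp hfg, L.compl_lattice_sdiff_singleton_mem_nhds 0]
      with x hx hxL
    rcases eq_or_ne x 0 with rfl | hx₀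
    · simp [hF, hg₀]
    · have hxmem : x ∈ (L.lattice : Set ℂ)ᶜ := fun hmem ↦ hxL ⟨hmem, hx₀⟩
      rw [hF, indicator_of_mem hxmem, hx hx₀]
  have hFdiff : Differentiable ℂ F := fun x ↦ by
    by_cases hx : x ∈ L.lattice
    · have hshift : F = fun z ↦ F (z - x) := funext fun z ↦ by
        simpa using hFper (z - x) x hx
      rw [hshift]
      rw [differentiableAt_comp_sub_const, sub_self]
      exact hg.congr_of_eventuallyEq hFg
    · have hnhds := (isOpen_compl_lattice L).mem_nhds hx
      exact (hf.differentiableAt hnhds).congr_of_eventuallyEq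
        (eventually_of_mem hnhds fun y hy ↦ indicator_of_mem hy f)
  calc f z = F z := (indicator_of_mem (s := (L.lattice : Set ℂ)ᶜ) hz f).symm
    _ = F 0 := hFdiff.apply_eq_apply_of_bounded
      (IsZLattice.isCompact_range_of_periodic L.lattice F hFdiff.continuous hFper).isBounded z 0
    _ = 0 := by simp [hF]

end WeierstrassSigma

/-! ### Lattices with sixfold rotational symmetry -/

section Hexagonal

variable {L : PeriodPair} {t w : ℂ}

/-- The lattice of `L` is stable under multiplication by `t`, where `t` is one of the two primitive
sixth roots of unity, encoded as the roots of `X ^ 2 - X + 1`. Such a lattice is hexagonal. -/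
structure IsHexagonal (L : PeriodPair) (t : ℂ) : Prop where
  sq_eq : t ^ 2 = t - 1
  mul_mem : ∀ l ∈ L.lattice, t * l ∈ L.lattice

/-- The quotient `r σ(r⁻¹ z) / σ(z) ^ 3` of sigma functions with `r = (1 + t)⁻¹`. -/
def sigmaQuotient (L : PeriodPair) (t z : ℂ) : ℂ :=
  (1 + t)⁻¹ * weierstrassSigma L ((1 + t) * z) / weierstrassSigma L z ^ 3

namespace IsHexagonal

lemma mul_one_sub (h : IsHexagonal L t) : t * (1 - t) = 1 := by linear_combination -h.sq_eq

lemma ne_zero (h : IsHexagonal L t) : t ≠ 0 := left_ne_zero_of_mul_eq_one h.mul_one_sub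

lemma inv_eq (h : IsHexagonal L t) : t⁻¹ = 1 - t := inv_eq_of_mul_eq_one_right h.mul_one_sub

lemma one_add_mul_one_add_inv (h : IsHexagonal L t) : (1 + t) * (1 + t⁻¹) = 3 := by
  rw [h.inv_eq]
  linear_combination -h.sq_eq

lemma one_add_ne_zero (h : IsHexagonal L t) : 1 + t ≠ 0 :=
  left_ne_zero_of_mul (h.one_add_mul_one_add_inv.trans_ne three_ne_zero)

lemma pow_ne_one (h : IsHexagonal L t) {k : ℕ} (hk₀ : 0 < k) (hk₃ : k < 3) : t ^ k ≠ 1 := by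
  have hsq := h.sq_eq
  interval_cases k
  · intro ht
    rw [pow_one] at ht
    norm_num [ht] at hsq
  · intro ht
    have ht₂ : t = 2 := by linear_combination ht - hsq
    norm_num [ht₂] at hsq

lemma mem_iff_mul_mem (h : IsHexagonal L t) (l : ℂ) : l ∈ L.lattice ↔ t * l ∈ L.lattice := by
  refine ⟨h.mul_mem l, fun hl ↦ ?_⟩
  have hsub := sub_mem hl (h.mul_mem _ hl)
  rwa [show t * l - t * (t * l) = l by linear_combination l * h.mul_one_sub] at hsub

lemma weierstrassProd_mul (h : IsHexagonal L t) (z : ℂ) :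
    weierstrassProd L (t * z) = weierstrassProd L z :=
  weierstrassProd_mul_left h.ne_zero h.mem_iff_mul_mem z

lemma weierstrassSigma_mul (h : IsHexagonal L t) (z : ℂ) :
    weierstrassSigma L (t * z) = t * weierstrassSigma L z := by
  rw [weierstrassSigma, weierstrassSigma, h.weierstrassProd_mul, mul_assoc]

lemma weierstrassSigma_add_mul (h : IsHexagonal L t) {η C : ℂ}
    (hw : ∀ z, weierstrassSigma L (z + w) = C * exp (η * z) * weierstrassSigma L z) (z : ℂ) :
    weierstrassSigma L (z + t * w) = C * exp (t⁻¹ * η * z) * weierstrassSigma L z := by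
  obtain ⟨x, rfl⟩ : ∃ x, z = t * x := ⟨t⁻¹ * z, (mul_inv_cancel_left₀ h.ne_zero z).symm⟩
  rw [← mul_add, h.weierstrassSigma_mul, h.weierstrassSigma_mul, hw,
    show t⁻¹ * η * (t * x) = η * x by field_simp [h.ne_zero]]
  ring

lemma sigmaQuotient_mul (h : IsHexagonal L t) (z : ℂ) :
    sigmaQuotient L t (t * z) = (t ^ 2)⁻¹ * sigmaQuotient L t z := by
  have ht := h.ne_zero
  rw [sigmaQuotient, sigmaQuotient, mul_left_comm, h.weierstrassSigma_mul, h.weierstrassSigma_mul]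
  field_simp

lemma exists_sigmaQuotient_add_eq (h : IsHexagonal L t) (hw : w ∈ L.lattice) :
    ∃ K ≠ 0, ∀ z, sigmaQuotient L t (z + w) = K * sigmaQuotient L t z := by
  obtain ⟨η, C, hC, hσ⟩ := exists_weierstrassSigma_add_eq hw
  refine ⟨exp (t⁻¹ * η * w) / C, div_ne_zero (exp_ne_zero _) hC, fun z ↦ ?_⟩
  have hexp : exp (t⁻¹ * η * ((1 + t) * z + w)) * exp (η * ((1 + t) * z)) =
      exp (t⁻¹ * η * w) * exp (η * z) ^ 3 := by
    rw [← exp_nat_mul, ← exp_add, ← exp_add]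
    congr 1
    push_cast
    linear_combination η * z * h.one_add_mul_one_add_inv
  have hnum : weierstrassSigma L ((1 + t) * (z + w)) =
      C ^ 2 * (exp (t⁻¹ * η * w) * exp (η * z) ^ 3) * weierstrassSigma L ((1 + t) * z) := by
    rw [show (1 + t) * (z + w) = (1 + t) * z + w + t * w by ring,
      h.weierstrassSigma_add_mul hσ, hσ, ← hexp]
    ring
  have hexp₀ := exp_ne_zero (η * z)
  rw [sigmaQuotient, sigmaQuotient, hnum, hσ, mul_pow, mul_pow]
  field_simp

lemma exists_sigmaQuotient_ne_zero (h : IsHexagonal L t) : ∃ z, sigmaQuotient L t z ≠ 0 := by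
  have hhalf := L.ω₁_div_two_notMem_lattice
  have hcancel := mul_inv_cancel_left₀ h.one_add_ne_zero (L.ω₁ / 2)
  have hz : (1 + t)⁻¹ * (L.ω₁ / 2) ∉ L.lattice := fun hz ↦ hhalf <| by
    rw [← hcancel, one_add_mul]
    exact add_mem hz (h.mul_mem _ hz)
  refine ⟨_, div_ne_zero (mul_ne_zero (inv_ne_zero h.one_add_ne_zero) ?_)
    (pow_ne_zero 3 (weierstrassSigma_ne_zero hz))⟩
  rw [hcancel]
  exact weierstrassSigma_ne_zero hhalf

lemma sigmaQuotient_add_mul (h : IsHexagonal L t) {K : ℂ}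
    (hw : ∀ z, sigmaQuotient L t (z + w) = K * sigmaQuotient L t z) (z : ℂ) :
    sigmaQuotient L t (z + t * w) = K * sigmaQuotient L t z := by
  obtain ⟨x, rfl⟩ : ∃ x, z = t * x := ⟨t⁻¹ * z, (mul_inv_cancel_left₀ h.ne_zero z).symm⟩
  rw [← mul_add, h.sigmaQuotient_mul, h.sigmaQuotient_mul, hw, mul_left_comm]

lemma sigmaQuotient_add (h : IsHexagonal L t) (hw : w ∈ L.lattice) (z : ℂ) :
    sigmaQuotient L t (z + w) = sigmaQuotient L t z := by
  obtain ⟨K, hK, hKw⟩ := h.exists_sigmaQuotient_add_eq hw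
  have hKtw := h.sigmaQuotient_add_mul hKw
  have hKttw := h.sigmaQuotient_add_mul hKtw
  obtain ⟨x, hx⟩ := h.exists_sigmaQuotient_ne_zero
  -- Translation by `t * w` multiplies by `K`, but as `w + t ^ 2 * w` it multiplies by `K * K`.
  have hsq : K * (K * sigmaQuotient L t x) = K * sigmaQuotient L t x := calc
    _ = sigmaQuotient L t (x + w + t * (t * w)) := by rw [hKttw, hKw]
    _ = sigmaQuotient L t (x + t * w) := by
      congr 1
      linear_combination w * h.sq_eq
    _ = K * sigmaQuotient L t x := hKtw x
  rw [hKw, mul_right_cancel₀ hx ((mul_left_cancel₀ hK hsq).trans (one_mul _).symm), one_mul]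

lemma exists_weierstrassProd_one_add_mul_sub_eq (h : IsHexagonal L t) :
    ∃ g, AnalyticAt ℂ g 0 ∧ ∀ᶠ z in 𝓝 0,
      weierstrassProd L ((1 + t) * z) - weierstrassProd L z ^ 3 = z ^ 3 * g z := by
  have hP := differentiable_weierstrassProd L
  have hdiff : Differentiable ℂ fun z ↦
      weierstrassProd L ((1 + t) * z) - weierstrassProd L z ^ 3 :=
    (hP.comp (differentiable_id.const_mul (1 + t))).sub (hP.pow 3)
  have horder := natCast_le_analyticOrderAt_of_comp_mul_left_eq (n := 3) hdiff (by simp)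
    (fun z ↦ by rw [mul_left_comm, h.weierstrassProd_mul, h.weierstrassProd_mul])
    fun k ↦ h.pow_ne_one
  simpa using (natCast_le_analyticOrderAt (hdiff.analyticAt 0)).mp horder

lemma exists_sigmaQuotient_sub_weierstrassP_eventuallyEq (h : IsHexagonal L t) :
    ∃ f, DifferentiableAt ℂ f 0 ∧ f 0 = 0 ∧
      (fun z ↦ sigmaQuotient L t z - ℘[L] z) =ᶠ[𝓝[≠] 0] f := by
  obtain ⟨g, hg, hPg⟩ := h.exists_weierstrassProd_one_add_mul_sub_eq
  have hP := differentiable_weierstrassProd L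
  have hP₀ : weierstrassProd L 0 ≠ 0 := by simp
  refine ⟨fun z ↦ z * g z / weierstrassProd L z ^ 3 - L.weierstrassPExcept 0 z,
    ((differentiableAt_id.mul hg.differentiableAt).div ((hP 0).pow 3) (pow_ne_zero 3 hP₀)).sub
      (L.analyticAt_weierstrassPExcept 0).differentiableAt, by simp, ?_⟩
  rw [EventuallyEq, eventually_nhdsWithin_iff]
  filter_upwards [hPg, hP.continuous.continuousAt.eventually_ne hP₀] with z hz hPz hz₀
  have ht := h.one_add_ne_zero
  have hz₀ : z ≠ 0 := hz₀
  rw [weierstrassP_eq_one_div_sq_add, sigmaQuotient, weierstrassSigma, weierstrassSigma,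
    eq_add_of_sub_eq hz]
  field_simp
  ring

end IsHexagonal

lemma differentiableOn_sigmaQuotient (L : PeriodPair) (t : ℂ) :
    DifferentiableOn ℂ (sigmaQuotient L t) (L.lattice : Set ℂ)ᶜ := by
  have hσ := differentiable_weierstrassSigma L
  exact (((hσ.comp (differentiable_id.const_mul (1 + t))).const_mul _).differentiableOn).div
    (hσ.pow 3).differentiableOn fun z hz ↦ pow_ne_zero 3 (weierstrassSigma_ne_zero hz)

theorem wp_eq_sigma_quotient_general (h : IsHexagonal L t) {z : ℂ} (hz : z ∉ L.lattice) :
    ℘[L] z = (1 + t)⁻¹ * weierstrassSigma L ((1 + t) * z) / weierstrassSigma L z ^ 3 := by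
  have hper (z w : ℂ) (hw : w ∈ L.lattice) :
      sigmaQuotient L t (z + w) - ℘[L] (z + w) = sigmaQuotient L t z - ℘[L] z := by
    rw [h.sigmaQuotient_add hw, L.weierstrassP_add_coe z ⟨w, hw⟩]
  obtain ⟨f, hf, hf₀, hQf⟩ := h.exists_sigmaQuotient_sub_weierstrassP_eventuallyEq
  exact (sub_eq_zero.mp (eq_zero_of_lattice_periodic hper
    ((differentiableOn_sigmaQuotient L t).sub L.differentiableOn_weierstrassP) hf hf₀ hQf hz)).symm

end Hexagonal

/-! ### The lattice spanned by `ϖ` and `e^{πi/3} ϖ` -/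

lemma τ_eq_exp_sq : τ = exp (Real.pi / 6 * I) ^ 2 := by
  rw [τ, ← exp_nat_mul]
  congr 1
  push_cast
  ring

lemma τ_ne_zero : τ ≠ 0 := exp_ne_zero _

lemma τ_add_inv : τ + τ⁻¹ = 1 := by
  have hcos := two_cos (Real.pi / 3 : ℝ)
  rw [← ofReal_cos, Real.cos_pi_div_three] at hcos
  rw [τ, ← exp_neg]
  convert! hcos.symm using 2
  all_goals push_cast; ring_nf

lemma τ_inv_eq : τ⁻¹ = 1 - τ := eq_sub_of_add_eq' τ_add_inv

lemma τ_sq : τ ^ 2 = τ - 1 := by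
  have hmul := mul_inv_cancel₀ τ_ne_zero
  rw [τ_inv_eq] at hmul
  linear_combination -hmul

lemma τ_im_ne_zero : τ.im ≠ 0 := by
  have hτ : τ.im = Real.sin (Real.pi / 3) := by
    rw [← exp_ofReal_mul_I_im, τ]
    push_cast
    ring_nf
  simp [hτ]

lemma rr_inv : rr⁻¹ = 1 + τ⁻¹ := by
  set e := exp (Real.pi / 6 * I) with he
  have hsqrt : ((√3 : ℝ) : ℂ) ^ 2 = 3 := by norm_cast; norm_num
  have hcos : (√3 : ℝ) = e + e⁻¹ := by
    have hcos := two_cos (Real.pi / 6 : ℝ)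
    rw [← ofReal_cos, Real.cos_pi_div_six, neg_mul, exp_neg] at hcos
    push_cast at hcos
    rw [he, ← hcos]
    ring
  have hrr : rr = √3 / 3 * e := by
    rw [rr, he, mul_div_right_comm]
    push_cast
    rfl
  have he₀ : e ≠ 0 := exp_ne_zero _
  refine inv_eq_of_mul_eq_one_right ?_
  calc rr * (1 + τ⁻¹) = √3 / 3 * (e + e⁻¹) := by
        rw [hrr, τ_eq_exp_sq, ← he]
        field_simp
    _ = 1 := by
        rw [← hcos]
        linear_combination hsqrt / 3

lemma ϖ₀_pos : 0 < ϖ₀ := by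
  have := Real.Gamma_pos_of_pos (s := 1 / 3) (by norm_num)
  unfold ϖ₀
  positivity

section HexPair

variable {ϖ : ℝ} (hϖ : ϖ ≠ 0)

/-- The hexagonal period pair `(ϖ, e^{πi/3} ϖ)`. -/
def hexPair : PeriodPair where
  ω₁ := ϖ
  ω₂ := τ * ϖ
  indep := by
    refine LinearIndependent.pair_iff.mpr fun a b hab ↦ ?_
    have hb : b = 0 := by simpa [hϖ, τ_im_ne_zero] using congrArg im hab
    exact ⟨by simpa [hϖ, hb] using hab, hb⟩

lemma coe_latticeEquivProd_symm_hexPair (p : ℤ × ℤ) :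
    ((hexPair hϖ).latticeEquivProd.symm p : ℂ) = hexPt ϖ p := by
  rw [PeriodPair.latticeEquiv_symm_apply, hexPt, mul_assoc]
  rfl

lemma coe_lattice_hexPair : ((hexPair hϖ).lattice : Set ℂ) = hexLattice ϖ := by
  rw [hexLattice, ← funext (coe_latticeEquivProd_symm_hexPair hϖ)]
  exact Subtype.range_coe.symm.trans
    ((hexPair hϖ).latticeEquivProd.symm.surjective.range_comp Subtype.val).symm

lemma isHexagonal_hexPair : IsHexagonal (hexPair hϖ) τ⁻¹ where
  sq_eq := by
    rw [τ_inv_eq]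
    linear_combination τ_sq
  mul_mem l hl := by
    obtain ⟨m, n, rfl⟩ := PeriodPair.mem_lattice.mp hl
    refine PeriodPair.mem_lattice.mpr ⟨m + n, -m, ?_⟩
    simp only [hexPair, τ_inv_eq]
    push_cast
    linear_combination n * ϖ * τ_sq

@[to_additive]
lemma tprod_lattice_hexPair {M : Type*} [CommMonoid M] [TopologicalSpace M] {f : ℂ → M}
    (hf : f 0 = 1) :
    ∏' l : (hexPair hϖ).lattice, f l = ∏' p : {p : ℤ × ℤ // p ≠ 0}, f (hexPt ϖ p) := by
  have hsupp : Function.mulSupport (fun p ↦ f (hexPt ϖ p)) ⊆ {p : ℤ × ℤ | p ≠ 0} := by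
    rintro p hp rfl
    exact hp (by simpa [hexPt] using hf)
  rw [← (hexPair hϖ).latticeEquivProd.symm.toEquiv.tprod_eq]
  refine Eq.trans (tprod_congr fun p ↦ ?_) (tprod_subtype_eq_of_mulSupport_subset hsupp).symm
  exact congrArg f (coe_latticeEquivProd_symm_hexPair hϖ p)

lemma wSigma_eq_weierstrassSigma (z : ℂ) : wSigma ϖ z = weierstrassSigma (hexPair hϖ) z := by
  rw [wSigma, weierstrassSigma, weierstrassProd,
    tprod_lattice_hexPair hϖ (f := fun l ↦ elementaryFactor (z / l)) (by simp)]
  simp only [elementaryFactor, div_pow, div_div, mul_comm (2 : ℂ)]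

end HexPair

lemma wp_eq_weierstrassP (z : ℂ) : wp z = ℘[hexPair ϖ₀_pos.ne'] z := by
  have hϖ := ϖ₀_pos.ne'
  have hne (p : {p : ℤ × ℤ // p ≠ 0}) : hexPt ϖ₀ p ≠ 0 := by
    rw [← coe_latticeEquivProd_symm_hexPair hϖ]
    simpa using p.2
  have hsum := tsum_lattice_hexPair hϖ
    (f := fun l : ℂ ↦ if l = 0 then (0 : ℂ) else 1 / (z - l) ^ 2 - 1 / l ^ 2) (if_pos rfl)
  simp only [hne, if_false] at hsum
  rw [wp, weierstrassP_eq_one_div_sq_add, ← hsum]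
  exact congrArg _ ((hexPair hϖ).hasSum_weierstrassPExcept 0 z).tsum_eq

/-- `℘(z) = r σ(r⁻¹ z)/σ(z)³`, i.e. `℘(z) = σ(z; r𝕋)/σ(z; 𝕋)³`
(using `σ(z; c𝕋) = c σ(z/c; 𝕋)`). -/
theorem wp_eq_sigma_quotient (z : ℂ) (hz : z ∉ hexLattice ϖ₀) :
    wp z = rr * wSigma ϖ₀ (rr⁻¹ * z) / (wSigma ϖ₀ z) ^ 3 := by
  have hϖ := ϖ₀_pos.ne'
  have hz' : z ∉ (hexPair hϖ).lattice := by rwa [← SetLike.mem_coe, coe_lattice_hexPair]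
  rw [← inv_inv rr, inv_inv rr⁻¹, rr_inv, wp_eq_weierstrassP, wSigma_eq_weierstrassSigma hϖ,
    wSigma_eq_weierstrassSigma hϖ]
  exact wp_eq_sigma_quotient_general (isHexagonal_hexPair hϖ) hz'
end
end
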